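/- arXiv:1303.5333 — 2 statements merged into one kernel-verified Lean document; each statement's English description precedes it below -/
import Mathlib

section
/- Let Z be a unique factorization domain, let f ∈ Z[X] be irreducible in Z[X] of positive degree, and let n ≥ 2 be an integer. Let σ(n) denote the radical of n, i.e., the product of the distinct primes dividing n. The following three statements are equivalent: (a) f(X^n) is not irreducible in Z[X]; (b) f(X^{σ(n)}) is not irreducible in Z[X], or 4 divides n and f(X^4) is not irreducible in Z[X]; (c) there exists a positive divisor t of n with t prime or t = 4 such that f(X^t) is not irreducible in Z[X]. -/
open Polynomial

universe u

open IntermediateField in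
theorem capelli_aux {K : Type u} [Field K] {n : ℕ} (hn : n ≠ 0) {a : K}
    (ha : ∀ p : ℕ, p.Prime → p ∣ n → ∀ b : K, b ^ p ≠ a)
    (ha4 : 4 ∣ n → ∀ b : K, -4 * b ^ 4 ≠ a) :
    Irreducible (X ^ n - C a) := by
  induction n using induction_on_primes generalizing K a with
  | zero => exact absurd rfl hn
  | one => simpa using irreducible_X_sub_C a
  | prime_mul p n hp IH =>
    rw [mul_comm]
    have hirr := X_pow_sub_C_irreducible_of_prime hp (ha p hp (dvd_mul_right _ _))
    apply X_pow_mul_sub_C_irreducible hirr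
    intro E _ _ x hx
    have hint : IsIntegral K x := not_not.mp fun h ↦ by
      simpa only [degree_zero, degree_X_pow_sub_C hp.pos,
        WithBot.natCast_ne_bot] using congr_arg degree (hx.symm.trans (dif_neg h))
    have hn0 : n ≠ 0 := by rintro rfl; simp at hn
    have hnorm : Algebra.norm K (AdjoinSimple.gen K x) = (-1) ^ p * (-a) := by
      rw [← adjoin.powerBasis_gen hint, Algebra.PowerBasis.norm_gen_eq_coeff_zero_minpoly]
      simp [minpoly_gen, hx, hp.ne_zero.symm, natDegree_X_pow_sub_C]
    have hfin : Module.finrank K K⟮x⟯ = p := by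
      rw [adjoin.finrank hint, hx, natDegree_X_pow_sub_C]
    have hgp : (AdjoinSimple.gen K x) ^ p = algebraMap K K⟮x⟯ a := by
      have h := minpoly.aeval K (AdjoinSimple.gen K x)
      rw [minpoly_gen, hx] at h
      simpa [sub_eq_zero] using h
    have hdim : (adjoin.powerBasis hint).dim = p := by
      rw [adjoin.powerBasis_dim, hx, natDegree_X_pow_sub_C]
    have hgen := adjoin.powerBasis_gen hint
    have hrep := (adjoin.powerBasis hint).exists_eq_aeval
    rw [hdim, hgen] at hrep
    generalize AdjoinSimple.gen K x = g at *
    have hsq2 : p = 2 → 2 ∣ n → ∀ b : K⟮x⟯, b ^ 2 ≠ g := by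
      rintro rfl h2 b hb
      obtain ⟨q, hq, rfl⟩ := hrep b
      rw [q.eq_X_add_C_of_natDegree_le_one (by omega)] at hb
      generalize q.coeff 1 = v at hb
      generalize q.coeff 0 = w at hb
      have h1 : algebraMap K K⟮x⟯ (w ^ 2 + v ^ 2 * a) + algebraMap K K⟮x⟯ (2 * w * v - 1) * g = 0 := by
        simp only [map_add, map_mul, map_sub, map_pow, map_one, aeval_C, aeval_X, map_ofNat] at hb ⊢
        rw [← hgp]
        linear_combination hb
      have h2' : 2 * w * v - 1 = 0 := by
        by_contra hs
        have hs' : algebraMap K K⟮x⟯ (2 * w * v - 1) ≠ 0 := by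
          simpa using (map_ne_zero (algebraMap K K⟮x⟯)).mpr hs
        apply ha 2 hp (dvd_mul_right _ _) (-(w ^ 2 + v ^ 2 * a) / (2 * w * v - 1))
        apply (algebraMap K K⟮x⟯).injective
        rw [← hgp, map_pow, map_div₀, map_neg]
        congr 1
        rw [div_eq_iff hs']
        linear_combination -h1
      rw [h2', map_zero, zero_mul, add_zero, map_eq_zero] at h1
      apply ha4 (by omega) w
      linear_combination (-4 * w ^ 2) * h1 + (a * (2 * w * v + 1)) * h2'
    apply IH hn0
    · intro q hq hqn b hb
      rcases hp.eq_two_or_odd' with rfl | hodd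
      · rcases hq.eq_two_or_odd' with rfl | hqodd
        · exact hsq2 rfl hqn b hb
        · apply ha q hq (dvd_mul_of_dvd_right hqn _) (- Algebra.norm K b)
          rw [hqodd.neg_pow, ← map_pow, hb, hnorm]
          ring
      · apply ha q hq (dvd_mul_of_dvd_right hqn _) (Algebra.norm K b)
        rw [← map_pow, hb, hnorm, hodd.neg_one_pow]
        ring
    · intro h4 b hb
      have hN : (-4 : K) ^ p * Algebra.norm K b ^ 4 = (-1) ^ p * (-a) := by
        rw [← hnorm, ← hb, map_mul, map_pow]
        have : (-4 : K⟮x⟯) = algebraMap K K⟮x⟯ (-4) := by rw [map_neg, map_ofNat]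
        rw [this, Algebra.norm_algebraMap, hfin]
      generalize Algebra.norm K b = N at hN
      rcases hp.eq_two_or_odd' with rfl | hodd
      · have ha0 : a ≠ 0 := fun h => ha 2 hp (dvd_mul_right _ _) 0 (by simp [h])
        have hs0 : 4 * N ^ 2 ≠ 0 := by
          intro h
          apply ha0
          linear_combination (-1) * ((4 * N ^ 2) * h) + hN
        have hs0' : algebraMap K K⟮x⟯ (4 * N ^ 2) ≠ 0 := (_root_.map_ne_zero _).mpr hs0
        have hgs : g ^ 2 = - algebraMap K K⟮x⟯ (4 * N ^ 2) ^ 2 := by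
          rw [hgp, ← map_pow, ← map_neg]
          congr 1
          linear_combination hN
        apply hsq2 rfl (dvd_trans (by norm_num) h4) (2 * (g / algebraMap K K⟮x⟯ (4 * N ^ 2)) * b ^ 2)
        rw [mul_pow, mul_pow, div_pow, hgs, neg_div, div_self (pow_ne_zero 2 hs0')]
        linear_combination hb
      · obtain ⟨k, rfl⟩ := hodd
        apply ha4 (dvd_mul_of_dvd_right h4 _) (2 ^ k * N)
        have e1 : (-4 : K) ^ (2 * k + 1) = -4 * (2 ^ k) ^ 4 := by
          rw [pow_succ, pow_mul, ← pow_mul 2 k 4, mul_comm k 4, pow_mul 2 4 k]; norm_num; ring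
        have e2 : (-1 : K) ^ (2 * k + 1) = -1 := by rw [pow_succ, pow_mul]; simp
        rw [e1, e2] at hN
        linear_combination hN

theorem capelli_conv_aux {K : Type*} [Field K] {f : K[X]} (hf : Irreducible f)
    (hmon : f.Monic) {n : ℕ} (hn : n ≠ 0) (h : Irreducible (f.comp (X ^ n)))
    {F : Type*} [Field F] [Algebra K F] [FiniteDimensional K F] (g : F)
    (hfin : Module.finrank K F = f.natDegree) (hfg : aeval g f = 0) :
    Irreducible (X ^ n - C g) := by
  have hnu : ¬ IsUnit (X ^ n - C g) := by
    rw [Polynomial.isUnit_iff_degree_eq_zero, degree_X_pow_sub_C (Nat.pos_of_ne_zero hn),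
      Nat.cast_eq_zero]
    exact hn
  have hne := X_pow_sub_C_ne_zero (Nat.pos_of_ne_zero hn) g
  obtain ⟨q, hq, hqd⟩ := WfDvdMonoid.exists_irreducible_factor hnu hne
  refine (associated_of_dvd_of_natDegree_le hqd hne ?_).irreducible hq
  rw [natDegree_X_pow_sub_C]
  have := Fact.mk hq
  have hr : AdjoinRoot.root q ^ n = algebraMap _ _ g := by
    have := eval₂_eq_zero_of_dvd_of_eval₂_eq_zero _ _ hqd (AdjoinRoot.eval₂_root q)
    rwa [eval₂_sub, eval₂_pow, eval₂_C, eval₂_X, sub_eq_zero] at this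
  have hz : aeval (AdjoinRoot.root q) (f.comp (X ^ n)) = 0 := by
    rw [aeval_comp, map_pow, aeval_X, hr, aeval_algebraMap_apply, hfg, map_zero]
  have hm : (f.comp (X ^ n)).Monic := hmon.comp (monic_X_pow n) (by simpa using hn)
  have hmin := minpoly.eq_of_irreducible_of_monic h hz hm
  have : Module.Finite F (AdjoinRoot q) := (AdjoinRoot.powerBasis hq.ne_zero).finite
  have : Module.Finite K (AdjoinRoot q) := Module.Finite.trans F _
  have hle := minpoly.natDegree_le (A := K) (AdjoinRoot.root q)
  rw [← hmin, natDegree_comp, natDegree_X_pow, ← Module.finrank_mul_finrank K F (AdjoinRoot q),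
    hfin, (AdjoinRoot.powerBasis hq.ne_zero).finrank, AdjoinRoot.powerBasis_dim] at hle
  exact Nat.le_of_mul_le_mul_left hle hf.natDegree_pos

open IntermediateField in
theorem capelli_conv {K : Type u} [Field K] {f : K[X]} (hf : Irreducible f)
    {n : ℕ} (hn : n ≠ 0) (h : Irreducible (f.comp (X ^ n)))
    {E : Type u} [Field E] [Algebra K E] (x : E) (hx : minpoly K x = f) :
    Irreducible (X ^ n - C (AdjoinSimple.gen K x)) := by
  have hint : IsIntegral K x := not_not.mp fun h ↦ hf.ne_zero (hx.symm.trans (dif_neg h))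
  have hmon : f.Monic := hx ▸ minpoly.monic hint
  have hfin : Module.finrank K K⟮x⟯ = f.natDegree := by
    rw [adjoin.finrank hint, hx]
  have hfg : aeval (AdjoinSimple.gen K x) f = 0 := by
    rw [← hx, ← minpoly_gen K x, minpoly.aeval]
  have : FiniteDimensional K K⟮x⟯ := adjoin.finiteDimensional hint
  exact capelli_conv_aux hf hmon hn h _ hfin hfg

theorem ne_neg_four {K : Type u} [Field K] {a : K} (h : Irreducible (X ^ 4 - C a)) (b : K) :
    -4 * b ^ 4 ≠ a := by
  rintro rfl
  have e : (X ^ 4 - C (-4 * b ^ 4) : K[X]) =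
      (C 1 * X ^ 2 + C (2 * b) * X + C (2 * b ^ 2)) * (C 1 * X ^ 2 + C (-2 * b) * X + C (2 * b ^ 2)) := by
    simp only [map_mul, map_pow, map_neg, map_ofNat, map_one]
    ring
  rcases h.isUnit_or_isUnit e with h | h <;>
  · have := natDegree_eq_zero_of_isUnit h
    rw [natDegree_quadratic one_ne_zero] at this
    omega

theorem field_monic {K : Type u} [Field K] {f : K[X]} (hf : Irreducible f) (hm : f.Monic)
    {n : ℕ} (hn : n ≠ 0) (h : ∀ t, t ∣ n → (t.Prime ∨ t = 4) → Irreducible (f.comp (X ^ t))) :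
    Irreducible (f.comp (X ^ n)) := by
  apply irreducible_comp hm (monic_X_pow n) hf
  intro E _ _ x hx
  rw [Polynomial.map_pow, map_X]
  apply capelli_aux hn
  · intro p hp hpn
    exact pow_ne_of_irreducible_X_pow_sub_C
      (capelli_conv hf hp.ne_zero (h p hpn (Or.inl hp)) x hx) dvd_rfl hp.ne_one
  · intro h4
    exact ne_neg_four (capelli_conv hf (by norm_num) (h 4 h4 (Or.inr rfl)) x hx)

theorem field_gen {K : Type u} [Field K] {f : K[X]} (hf : Irreducible f)
    {n : ℕ} (hn : n ≠ 0) (h : ∀ t, t ∣ n → (t.Prime ∨ t = 4) → Irreducible (f.comp (X ^ t))) :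
    Irreducible (f.comp (X ^ n)) := by
  have hl : f.leadingCoeff⁻¹ ≠ 0 := inv_ne_zero (leadingCoeff_ne_zero.mpr hf.ne_zero)
  have hu : IsUnit (C f.leadingCoeff⁻¹) := isUnit_C.mpr hl.isUnit
  have key : ∀ g : K[X], Irreducible (g * C f.leadingCoeff⁻¹) ↔ Irreducible g := fun g =>
    irreducible_mul_isUnit hu
  have := field_monic (f := f * C f.leadingCoeff⁻¹) ((key f).mpr hf)
    (monic_mul_leadingCoeff_inv hf.ne_zero) hn
    (fun t ht ht' => by rw [mul_comp, C_comp, key]; exact h t ht ht')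
  rwa [mul_comp, C_comp, key] at this

theorem prim_comp {Z : Type*} [CommRing Z] [IsDomain Z] {f : Z[X]} (hf : f.IsPrimitive)
    {n : ℕ} (hn : n ≠ 0) : (f.comp (X ^ n)).IsPrimitive := by
  intro r hr
  apply hf
  rw [C_dvd_iff_dvd_coeff] at hr ⊢
  intro i
  have := hr (i * n)
  rwa [← expand_eq_comp_X_pow, coeff_expand_mul (Nat.pos_of_ne_zero hn)] at this

theorem ufd_main {Z : Type*} [CommRing Z] [IsDomain Z] [UniqueFactorizationMonoid Z]
    (f : Polynomial Z) (hf : Irreducible f) (hdeg : 0 < f.natDegree) {n : ℕ} (hn : n ≠ 0)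
    (h : ∀ t, t ∣ n → (t.Prime ∨ t = 4) → Irreducible (f.comp (X ^ t))) :
    Irreducible (f.comp (X ^ n)) := by
  have hp : f.IsPrimitive := hf.isPrimitive hdeg.ne'
  have key : ∀ m, m ≠ 0 → (Irreducible (f.comp (X ^ m)) ↔
      Irreducible ((f.map (algebraMap Z (FractionRing Z))).comp (X ^ m))) := by
    intro m hm
    rw [(prim_comp hp hm).irreducible_iff_irreducible_map_fraction_map (K := FractionRing Z),
      map_comp, Polynomial.map_pow, map_X]
  rw [key n hn]
  apply field_gen ((hp.irreducible_iff_irreducible_map_fraction_map (K := FractionRing Z)).mp hf) hn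
  intro t ht ht'
  exact (key t (ne_zero_of_dvd_ne_zero hn ht)).mp (h t ht ht')

theorem irr_of_dvd {Z : Type*} [CommRing Z] [IsDomain Z]
    (f : Polynomial Z) {n t : ℕ} (hn : n ≠ 0) (ht : t ∣ n) (h : Irreducible (f.comp (X ^ n))) :
    Irreducible (f.comp (X ^ t)) := by
  obtain ⟨k, rfl⟩ := ht
  rw [← expand_eq_comp_X_pow] at h ⊢
  rw [mul_comm, expand_mul] at h
  exact of_irreducible_expand (right_ne_zero_of_mul hn) h

theorem stmt7 {Z : Type*} [CommRing Z] [IsDomain Z] [UniqueFactorizationMonoid Z]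
    (f : Polynomial Z) (hf : Irreducible f) (hdeg : 0 < f.natDegree)
    (n : ℕ) (hn : 2 ≤ n) :
    (¬ Irreducible (f.comp (X ^ n)) ↔
        (¬ Irreducible (f.comp (X ^ (∏ p ∈ n.primeFactors, p))) ∨
          (4 ∣ n ∧ ¬ Irreducible (f.comp (X ^ 4))))) ∧
      (¬ Irreducible (f.comp (X ^ n)) ↔
        ∃ t : ℕ, 0 < t ∧ t ∣ n ∧ (t.Prime ∨ t = 4) ∧ ¬ Irreducible (f.comp (X ^ t))) := by
  have hn0 : n ≠ 0 := by omega
  have hac : ¬ Irreducible (f.comp (X ^ n)) →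
        ∃ t : ℕ, 0 < t ∧ t ∣ n ∧ (t.Prime ∨ t = 4) ∧ ¬ Irreducible (f.comp (X ^ t)) := by
    intro h
    by_contra hc
    apply h
    apply ufd_main f hf hdeg hn0
    intro t ht ht'
    by_contra hi
    exact hc ⟨t, Nat.pos_of_dvd_of_pos ht (by omega), ht, ht', hi⟩
  refine ⟨⟨fun h => ?_, ?_⟩, hac, ?_⟩
  · obtain ⟨t, ht0, htn, ht | rfl, hi⟩ := hac h
    · left
      intro h'
      refine hi (irr_of_dvd f ?_ ?_ h')
      · exact Finset.prod_ne_zero_iff.mpr fun p hp => (Nat.prime_of_mem_primeFactors hp).ne_zero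
      · exact Finset.dvd_prod_of_mem _ (Nat.mem_primeFactors.mpr ⟨ht, htn, hn0⟩)
    · exact Or.inr ⟨htn, hi⟩
  · rintro (h | ⟨h4, h⟩) h'
    · exact h (irr_of_dvd f hn0 (Nat.prod_primeFactors_dvd n) h')
    · exact h (irr_of_dvd f hn0 h4 h')
  · rintro ⟨t, _, htn, _, h⟩ h'
    exact h (irr_of_dvd f hn0 htn h')
end

section
/- Let Z be a unique factorization domain, let f ∈ Z[X] be irreducible in Z[X] of positive degree, let p be an odd prime, and let s ≥ 1 be an integer. Then f(X^{p^s}) is not irreducible in Z[X] if and only if f(X^p) is not irreducible in Z[X]. -/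
open Polynomial

lemma aux_monic {K : Type*} [Field K] (f : K[X]) (hm : f.Monic) (p : ℕ) (hp : p.Prime)
    (hp2 : p ≠ 2) (s : ℕ) (h : Irreducible (expand K p f)) :
    Irreducible (expand K (p ^ s) f) := by
  have hf : Irreducible f := of_irreducible_expand hp.ne_zero h
  rw [expand_eq_comp_X_pow]
  refine irreducible_comp hm (monic_X_pow _) hf ?_
  intro E _ _ x hx
  rw [Polynomial.map_pow, map_X]
  apply X_pow_sub_C_irreducible_of_prime_pow hp hp2
  intro b hb
  have hxi : IsIntegral K x := by
    by_contra hc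
    rw [minpoly.eq_zero hc] at hx
    exact hf.ne_zero hx.symm
  have := IntermediateField.adjoin.finiteDimensional hxi
  have hbi : IsIntegral K b := IsIntegral.of_finite K b
  have h0 : aeval b (expand K p f) = 0 := by
    rw [expand_aeval, hb, ← hx, ← IntermediateField.minpoly_gen]
    exact minpoly.aeval _ _
  have h1 := minpoly.eq_of_irreducible_of_monic h h0 ((monic_expand_iff hp.pos).2 hm)
  have h2 := minpoly.natDegree_le (A := K) b
  rw [← h1, natDegree_expand, IntermediateField.adjoin.finrank hxi, hx] at h2
  have h3 : 0 < f.natDegree := hf.natDegree_pos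
  have := hp.two_le
  nlinarith

lemma aux_field {K : Type*} [Field K] (f : K[X]) (p : ℕ) (hp : p.Prime)
    (hp2 : p ≠ 2) (s : ℕ) (h : Irreducible (expand K p f)) :
    Irreducible (expand K (p ^ s) f) := by
  have hf : f ≠ 0 := (of_irreducible_expand hp.ne_zero h).ne_zero
  have hu : IsUnit (C f.leadingCoeff⁻¹) := by simpa [isUnit_C] using hf
  have key := aux_monic (f * C f.leadingCoeff⁻¹) (monic_mul_leadingCoeff_inv hf) p hp hp2 s
  simp only [map_mul, expand_C] at key
  rw [irreducible_mul_isUnit hu, irreducible_mul_isUnit hu] at key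
  exact key h

lemma aux_prim {Z : Type*} [CommRing Z] (f : Z[X]) (hf : f.IsPrimitive) (n : ℕ) (hn : 0 < n) :
    (expand Z n f).IsPrimitive := by
  intro r hr
  apply hf
  rw [C_dvd_iff_dvd_coeff] at hr ⊢
  intro i
  simpa [coeff_expand_mul hn] using hr (i * n)

theorem stmt9 {Z : Type*} [CommRing Z] [IsDomain Z] [UniqueFactorizationMonoid Z]
    (f : Polynomial Z) (hf : Irreducible f) (hdeg : 0 < f.natDegree)
    (p : ℕ) (hp : p.Prime) (hodd : Odd p) (s : ℕ) (hs : 1 ≤ s) :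
    ¬ Irreducible (f.comp (X ^ p ^ s)) ↔ ¬ Irreducible (f.comp (X ^ p)) := by
  rw [not_iff_not, ← expand_eq_comp_X_pow, ← expand_eq_comp_X_pow]
  have hprim := hf.isPrimitive hdeg.ne'
  have hp2 : p ≠ 2 := by rintro rfl; exact absurd hodd (by decide)
  constructor
  · intro h
    obtain ⟨t, rfl⟩ : ∃ t, s = t + 1 := ⟨s - 1, by omega⟩
    rw [pow_succ, expand_mul] at h
    exact of_irreducible_expand (pow_ne_zero _ hp.ne_zero) h
  · intro h
    obtain ⟨_⟩ : Nonempty (NormalizedGCDMonoid Z) := inferInstance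
    rw [(aux_prim f hprim _ (pow_pos hp.pos s)).irreducible_iff_irreducible_map_fraction_map
      (K := FractionRing Z), map_expand]
    rw [(aux_prim f hprim _ hp.pos).irreducible_iff_irreducible_map_fraction_map
      (K := FractionRing Z), map_expand] at h
    exact aux_field _ p hp hp2 s h
end
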